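/- arXiv:2409.19777 — 2 statements merged into one kernel-verified Lean document; each statement's English description precedes it below -/
import Mathlib

section
/- Let (Ω, ℱ, P) be a probability space, X : Ω → 𝒳 measurable, A : Ω → ℝ measurable with A(ω) ∈ {0,1} almost surely, and π : 𝒳 → ℝ a measurable policy function with π(x) ∈ {0,1} for all x. Let p : Ω → ℝ be the conditional expectation of A given σ(X), with ε ≤ p ≤ 1 − ε almost surely for some ε > 0. Then for every bounded measurable f : ℝ × 𝒳 → ℝ, E[ π(X)·(f(1, X) − f(0, X)) + f(0, X) ] = E[ ((π(X)·(A − p) + p·(1 − A)) / (p·(1 − p))) · f(A, X) ]. -/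
/-! Let `f₁ = f(1, X)`, `f₀ = f(0, X)` and `g = π(X) f₁ / p - (1 - π(X)) f₀ / (1 - p)`. Checking
`A = 0` and `A = 1` separately shows that almost surely
`α(A, X) f(A, X) = m(f, W) + g (A - p)`. Since `g` is bounded and `σ(X)`-measurable, it can be
pulled out of the conditional expectation, so `E[g (A - p)] = 0`. -/

open MeasureTheory

/-- Residuals of a conditional expectation are orthogonal to bounded `m`-measurable functions. -/
lemma integral_mul_sub_condExp_eq_zero {Ω : Type*} {m m₀ : MeasurableSpace Ω} (hm : m ≤ m₀)
    (P : Measure[m₀] Ω) [IsProbabilityMeasure P] {g A : Ω → ℝ} (hg : StronglyMeasurable[m] g)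
    (hA : Integrable A P) (c : ℝ) (hgc : ∀ᵐ ω ∂P, ‖g ω‖ ≤ c) :
    Integrable (fun ω => g ω * (A ω - (P[A | m]) ω)) P ∧
      ∫ ω, g ω * (A ω - (P[A | m]) ω) ∂P = 0 := by
  have hg' : AEStronglyMeasurable g P := (hg.mono hm).aestronglyMeasurable
  have i1 : Integrable (fun ω => g ω * A ω) P := hA.bdd_mul hg' hgc
  have i2 : Integrable (fun ω => g ω * (P[A | m]) ω) P := integrable_condExp.bdd_mul hg' hgc
  simp only [mul_sub]
  refine ⟨i1.sub i2, ?_⟩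
  rw [integral_sub i1 i2, sub_eq_zero]
  have h := integral_congr_ae (condExp_stronglyMeasurable_mul_of_bound hm hg hA c hgc)
  rw [integral_condExp hm] at h
  exact h

/-- **Riesz representer of the APE.** Let `(Ω, ℱ, P)` be a probability space,
`X : Ω → 𝒳` measurable, `A : Ω → ℝ` measurable with `A ∈ {0,1}` a.s., and `π : 𝒳 → ℝ` a
measurable policy function with `π(x) ∈ {0,1}` for all `x`.  Let `p` be the conditional
expectation of `A` given `σ(X)`, with `ε ≤ p ≤ 1 − ε` a.s. for some `ε > 0`.  Then for every
bounded measurable `f : ℝ × 𝒳 → ℝ`,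
`E[π(X)·(f(1,X) − f(0,X)) + f(0,X)]
  = E[((π(X)·(A − p) + p·(1 − A)) / (p·(1 − p))) · f(A,X)]`. -/
theorem statement17 {Ω 𝒳 : Type*} [MeasurableSpace Ω] [MeasurableSpace 𝒳]
    (P : Measure Ω) [IsProbabilityMeasure P]
    (X : Ω → 𝒳) (hX : Measurable X)
    (A : Ω → ℝ) (hA : Measurable A) (hA01 : ∀ᵐ ω ∂P, A ω = 0 ∨ A ω = 1)
    (π : 𝒳 → ℝ) (hπ : Measurable π) (hπ01 : ∀ x, π x = 0 ∨ π x = 1)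
    (p : Ω → ℝ)
    (hp : p = P[A | MeasurableSpace.comap X (inferInstance : MeasurableSpace 𝒳)])
    (ε : ℝ) (hε : 0 < ε) (hpb : ∀ᵐ ω ∂P, ε ≤ p ω ∧ p ω ≤ 1 - ε) :
    ∀ f : ℝ × 𝒳 → ℝ, Measurable f → (∃ C, ∀ w, |f w| ≤ C) →
      ∫ ω, (π (X ω) * (f (1, X ω) - f (0, X ω)) + f (0, X ω)) ∂P
        = ∫ ω, ((π (X ω) * (A ω - p ω) + p ω * (1 - A ω)) / (p ω * (1 - p ω)))
            * f (A ω, X ω) ∂P := by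
  intro f hf hfb
  obtain ⟨C, hC⟩ := hfb
  have hm : MeasurableSpace.comap X inferInstance ≤ (inferInstance : MeasurableSpace Ω) :=
    hX.comap_le
  have hpm : Measurable[MeasurableSpace.comap X inferInstance] p := by
    rw [hp]; exact stronglyMeasurable_condExp.measurable
  have hXm : Measurable[MeasurableSpace.comap X inferInstance] X := comap_measurable X
  have hπ1 : ∀ x, |π x| ≤ 1 ∧ |1 - π x| ≤ 1 := fun x => by
    rcases hπ01 x with h | h <;> simp [h]
  have hAint : Integrable A P := by
    refine Integrable.of_bound hA.aestronglyMeasurable 1 ?_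
    filter_upwards [hA01] with ω h
    rcases h with h | h <;> simp [h]
  have hfm : ∀ a : ℝ, Measurable fun x => f (a, x) := fun a => by fun_prop
  let g : Ω → ℝ := fun ω =>
    π (X ω) * f (1, X ω) / p ω - (1 - π (X ω)) * f (0, X ω) / (1 - p ω)
  have hg : StronglyMeasurable[MeasurableSpace.comap X inferInstance] g := by
    refine Measurable.stronglyMeasurable ?_
    exact (((hπ.comp hXm).mul ((hfm 1).comp hXm)).div hpm).sub
      (((measurable_const.sub (hπ.comp hXm)).mul ((hfm 0).comp hXm)).div
        (measurable_const.sub hpm))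
  have hgb : ∀ᵐ ω ∂P, ‖g ω‖ ≤ C / ε + C / ε := by
    have key : ∀ a b q : ℝ, |a| ≤ 1 → |b| ≤ C → ε ≤ q → |a * b / q| ≤ C / ε := by
      intro a b q ha hb hq
      rw [abs_div, abs_mul, abs_of_pos (hε.trans_le hq)]
      have hC0 : 0 ≤ C := (abs_nonneg b).trans hb
      have : |a| * |b| ≤ C := by nlinarith [abs_nonneg a, abs_nonneg b]
      gcongr
    filter_upwards [hpb] with ω h
    exact (abs_sub _ _).trans (add_le_add (key _ _ _ (hπ1 _).1 (hC _) h.1)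
      (key _ _ _ (hπ1 _).2 (hC _) (by linarith [h.2])))
  obtain ⟨i1, h0⟩ := integral_mul_sub_condExp_eq_zero hm P hg hAint _ hgb
  rw [← hp] at i1 h0
  have i2 : Integrable (fun ω => π (X ω) * (f (1, X ω) - f (0, X ω)) + f (0, X ω)) P := by
    refine Integrable.of_bound (C := C) ?_ ?_
    · exact ((((hπ.comp hX).mul (((hfm 1).comp hX).sub ((hfm 0).comp hX))).add
        ((hfm 0).comp hX))).aestronglyMeasurable
    · refine .of_forall fun ω => ?_
      rcases hπ01 (X ω) with h | h <;> simp [h, hC]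
  have heq : (fun ω => ((π (X ω) * (A ω - p ω) + p ω * (1 - A ω)) / (p ω * (1 - p ω)))
      * f (A ω, X ω)) =ᵐ[P] fun ω =>
        (π (X ω) * (f (1, X ω) - f (0, X ω)) + f (0, X ω)) + g ω * (A ω - p ω) := by
    filter_upwards [hA01, hpb] with ω h hpω
    have hp0 : p ω ≠ 0 := (hε.trans_le hpω.1).ne'
    have hp1 : 1 - p ω ≠ 0 := (show 0 < 1 - p ω by linarith [hpω.2]).ne'
    simp only [g]
    rcases h with h | h <;> rw [h] <;> field_simp <;> ring
  rw [integral_congr_ae heq, integral_add i2 i1, h0, add_zero]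
end

section
/- Let (Ω, ℱ, P) be a probability space, X : Ω → 𝒳 measurable, and p : 𝒳 → ℝ measurable with ε ≤ p(x) ≤ 1 − ε for all x, for some ε > 0. Suppose c := (E[1/(p(X)·(1 − p(X)))])⁻¹, and define β_⊥ : ℝ × 𝒳 → ℝ by β_⊥(a, x) = p(x) + (a − p(x))·(1 − c/(p(x)(1 − p(x)))). Then: (i) E[β_⊥(1, X) − β_⊥(0, X)] = 0, i.e., β_⊥ satisfies the zero-average-moment constraint for the ATE moment; and (ii) for all a ∈ ℝ and x ∈ 𝒳, a − β_⊥(a, x) = c·(a − p(x))/(p(x)(1 − p(x))), i.e., β − β_⊥ is proportional (with constant c) to the ATE Riesz representer, where β(a, x) = a. -/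
/-!
The increment `βp 1 x - βp 0 x` equals `1 - c * g x` with `g = (p (1 - p))⁻¹`, so its mean is
`1 - c * E[g(X)]`. This vanishes because `c` is the inverse of `E[g(X)]`, provided `E[g(X)]` is a
genuine nonzero integral: overlap gives `1 ≤ g ≤ (ε ^ 2)⁻¹`, hence `g(X)` is integrable and
`E[g(X)] ≥ 1`. Proportionality to the Riesz representer is an algebraic identity.
-/

open MeasureTheory

/-- **closed form of `β⊥` for the ATE.** Let `(Ω, ℱ, P)` be a probability
space, `X : Ω → 𝒳` measurable, and `p : 𝒳 → ℝ` measurable with `ε ≤ p(x) ≤ 1 − ε` for all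
`x` (some `ε > 0`).  Let `c := (E[1/(p(X)(1 − p(X)))])⁻¹` and define
`β⊥(a, x) = p(x) + (a − p(x))·(1 − c/(p(x)(1 − p(x))))`.  Then:
(i) `E[β⊥(1, X) − β⊥(0, X)] = 0` (the zero-average-moment constraint for the ATE moment); and
(ii) for all `a, x`, `a − β⊥(a, x) = c·(a − p(x))/(p(x)(1 − p(x)))`, i.e. `β − β⊥` is
proportional (with constant `c`) to the ATE Riesz representer, where `β(a,x) = a`. -/
theorem statement18 {Ω 𝒳 : Type*} [MeasurableSpace Ω] [MeasurableSpace 𝒳]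
    (P : Measure Ω) [IsProbabilityMeasure P]
    (X : Ω → 𝒳) (hX : Measurable X)
    (p : 𝒳 → ℝ) (hp : Measurable p)
    (ε : ℝ) (hε : 0 < ε) (hpb : ∀ x, ε ≤ p x ∧ p x ≤ 1 - ε)
    (c : ℝ) (hc : c = (∫ ω, (p (X ω) * (1 - p (X ω)))⁻¹ ∂P)⁻¹)
    (βp : ℝ → 𝒳 → ℝ)
    (hβp : ∀ a x, βp a x = p x + (a - p x) * (1 - c / (p x * (1 - p x)))) :
    (∫ ω, (βp 1 (X ω) - βp 0 (X ω)) ∂P) = 0 ∧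
    ∀ (a : ℝ) (x : 𝒳), a - βp a x = c * (a - p x) / (p x * (1 - p x)) := by
  have hmeas : Measurable fun ω => (p (X ω) * (1 - p (X ω)))⁻¹ := by fun_prop
  have hlow : ∀ x, ε ^ 2 ≤ p x * (1 - p x) := fun x => by
    nlinarith [hpb x, mul_le_mul (hpb x).1 (by linarith [(hpb x).2] : ε ≤ 1 - p x)
      hε.le (by linarith [(hpb x).1])]
  have hpos : ∀ x, 0 < p x * (1 - p x) := fun x => lt_of_lt_of_le (by positivity) (hlow x)
  have hint : Integrable (fun ω => (p (X ω) * (1 - p (X ω)))⁻¹) P := by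
    refine Integrable.of_bound hmeas.aestronglyMeasurable (ε ^ 2)⁻¹ (ae_of_all _ fun ω => ?_)
    rw [Real.norm_of_nonneg (inv_nonneg.mpr (hpos _).le)]
    exact inv_anti₀ (by positivity) (hlow _)
  have hone : 1 ≤ ∫ ω, (p (X ω) * (1 - p (X ω)))⁻¹ ∂P := by
    have h := integral_mono (μ := P) (integrable_const (1 : ℝ)) hint fun ω =>
      (one_le_inv₀ (hpos (X ω))).mpr (by nlinarith [sq_nonneg (p (X ω) - 1 / 2)])
    simpa using h
  refine ⟨?_, fun a x => by rw [hβp]; ring⟩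
  have hincr : ∀ ω, βp 1 (X ω) - βp 0 (X ω) = 1 - c * (p (X ω) * (1 - p (X ω)))⁻¹ := fun ω => by
    rw [hβp, hβp]; ring
  simp_rw [hincr]
  rw [integral_sub (integrable_const _) (hint.const_mul c), integral_const_mul, hc,
    inv_mul_cancel₀ (by linarith)]
  simp
end
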